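/- (Intrinsic element is characteristic) Let 𝒜 be any hyperplane arrangement in ℝ^n, d the common dimension of its minimal flats, and t ∈ ℝ. Then the intrinsic element ν_t = Σ_F (−1)^{dim F} ( Σ_{k=d}^{dim F} (−1)^k v_k(cl F) t^{k−d} ) H_F ∈ ℝΣ[𝒜] is characteristic of parameter t; that is, for every flat X of 𝒜, Σ_{F : supp(F) ⊆ X} (−1)^{dim F} Σ_{k=d}^{dim F} (−1)^k v_k(cl F) t^{k−d} = t^{dim(X) − d}. -/

import Mathlib

open Finset MeasureTheory

noncomputable section

namespace CharElts

/-- Ambient Euclidean space `ℝ^n`. -/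
abbrev V (n : ℕ) := EuclideanSpace ℝ (Fin n)

/-- An affine functional on `ℝ^n`; a hyperplane is its zero set. -/
abbrev AffForm (n : ℕ) := V n →ᵃ[ℝ] ℝ

/-- The hyperplane determined by an affine functional. -/
def hypSet {n : ℕ} (ℓ : AffForm n) : Set (V n) := {x | ℓ x = 0}

variable {n : ℕ} (𝒜 : Finset (AffForm n))

/-- Index type for the hyperplanes of the arrangement. -/
abbrev Idx := {ℓ : AffForm n // ℓ ∈ 𝒜}

/-- The (possibly empty) set cut out by a sign vector `σ`. -/
def faceSet (σ : Idx 𝒜 → SignType) : Set (V n) :=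
  {x | ∀ ℓ : Idx 𝒜, SignType.sign (ℓ.1 x) = σ ℓ}

/-- A face of the arrangement: a sign vector whose face set is nonempty. -/
@[ext] structure Face where
  sgn : Idx 𝒜 → SignType
  nonempty : (faceSet 𝒜 sgn).Nonempty

open Classical in
instance : Fintype (Face 𝒜) :=
  Fintype.ofInjective Face.sgn (fun F G h => by cases F; cases G; simpa using h)

/-- The underlying point set of a face. -/
def Face.carrier (F : Face 𝒜) : Set (V n) := faceSet 𝒜 F.sgn

/-- A flat: a nonempty intersection of some subcollection of the hyperplanes
(the empty intersection gives all of `ℝ^n`). -/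
def IsFlat (X : Set (V n)) : Prop :=
  X.Nonempty ∧ ∃ P : Idx 𝒜 → Prop, X = ⋂ ℓ ∈ {ℓ : Idx 𝒜 | P ℓ}, hypSet ℓ.1

/-- The poset of flats, ordered by inclusion. -/
def Flat := {X : Set (V n) // IsFlat 𝒜 X}

instance : PartialOrder (Flat 𝒜) :=
  inferInstanceAs (PartialOrder {X : Set (V n) // IsFlat 𝒜 X})

lemma flat_eq_inter (X : Flat 𝒜) :
    X.1 = ⋂ ℓ ∈ {ℓ : Idx 𝒜 | X.1 ⊆ hypSet ℓ.1}, hypSet ℓ.1 := by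
  obtain ⟨Z, hne, P, rfl⟩ := X
  apply subset_antisymm
  · intro x hx
    simp only [Set.mem_iInter, Set.mem_setOf_eq]
    intro ℓ hℓ
    exact hℓ hx
  · intro x hx
    simp only [Set.mem_iInter, Set.mem_setOf_eq] at hx ⊢
    intro ℓ hℓ
    refine hx ℓ ?_
    intro y hy
    simp only [Set.mem_iInter, Set.mem_setOf_eq] at hy
    exact hy ℓ hℓ

open Classical in
instance : Fintype (Flat 𝒜) :=
  Fintype.ofInjective (fun X : Flat 𝒜 => {ℓ : Idx 𝒜 | X.1 ⊆ hypSet ℓ.1}) <| by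
    intro X Y h
    dsimp only at h
    apply Subtype.ext
    rw [flat_eq_inter 𝒜 X, flat_eq_inter 𝒜 Y, h]

/-- The top flat: the whole ambient space. -/
def topFlat : Flat 𝒜 :=
  ⟨Set.univ, ⟨⟨0, trivial⟩, fun _ => False, by simp⟩⟩

/-- The support of a face: the intersection of the hyperplanes on which it lies. -/
def supp (F : Face 𝒜) : Flat 𝒜 :=
  ⟨⋂ ℓ ∈ {ℓ : Idx 𝒜 | F.sgn ℓ = 0}, hypSet ℓ.1, by
    constructor
    · obtain ⟨x, hx⟩ := F.nonempty
      refine ⟨x, ?_⟩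
      simp only [Set.mem_iInter, Set.mem_setOf_eq]
      intro ℓ hℓ
      have h0 := hx ℓ
      rw [hℓ] at h0
      simpa [hypSet, sign_eq_zero_iff] using h0
    · exact ⟨fun ℓ => F.sgn ℓ = 0, rfl⟩⟩

/-- The dimension of (the affine hull of) a subset of `ℝ^n`. -/
def dimS (X : Set (V n)) : ℕ := Module.finrank ℝ (vectorSpan ℝ X)

open Classical in
/-- An element `w = Σ_F w^F H_F` of the Tits algebra (recorded by its coefficient
vector) is *characteristic of parameter `t`* if for every flat `X`, the sum of the
coefficients of the faces with support contained in `X` equals `t ^ rk X`,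
where `rk X = dim X - d` and `d` is the common dimension of the minimal flats. -/
def IsCharacteristic (d : ℕ) (w : Face 𝒜 → ℝ) (t : ℝ) : Prop :=
  ∀ X : Flat 𝒜,
    (∑ F : Face 𝒜, if (supp 𝒜 F).1 ⊆ X.1 then w F else 0) = t ^ (dimS X.1 - d)

/-- The sign vector of the Tits product `FG` of two faces. -/
def combineSgn {I : Type*} (σ τ : I → SignType) : I → SignType :=
  fun ℓ => if σ ℓ = 0 then τ ℓ else σ ℓ

open Classical in
/-- The product of the Tits algebra, on coefficient vectors:
`(u·v)^C = Σ_{F,G : FG = C} u^F v^G`, extending `H_F · H_G = H_{FG}` bilinearly. -/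
def mulT (u v : Face 𝒜 → ℝ) : Face 𝒜 → ℝ :=
  fun C => ∑ F : Face 𝒜, ∑ G : Face 𝒜,
    if combineSgn F.sgn G.sgn = C.sgn then u F * v G else 0

open Classical in
/-- The basis element `H_F` of the Tits algebra, as a coefficient vector. -/
def unitV (F : Face 𝒜) : Face 𝒜 → ℝ := fun G => if G = F then 1 else 0

/-- A chamber: a face whose sign vector is nowhere zero. -/
def IsChamber (F : Face 𝒜) : Prop := ∀ ℓ : Idx 𝒜, F.sgn ℓ ≠ 0

open Classical in
/-- `IsMoebius 𝒜 μ` states that `μ` is the Möbius function of the poset of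
flats of `𝒜` (these conditions determine `μ` uniquely). -/
def IsMoebius (μ : Flat 𝒜 → Flat 𝒜 → ℝ) : Prop :=
  (∀ X, μ X X = 1) ∧
  (∀ X Y : Flat 𝒜, X < Y →
    (∑ Z : Flat 𝒜, if X ≤ Z ∧ Z ≤ Y then μ X Z else 0) = 0) ∧
  (∀ X Y : Flat 𝒜, ¬ X ≤ Y → μ X Y = 0)

open Classical in
/-- `χ(𝒜^X, t) = Σ_{Y ≤ X} μ(Y, X) t^{rk Y}`: the characteristic polynomial of the
arrangement under the flat `X`.  Taking `X = ⊤` gives the characteristic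
polynomial of `𝒜` itself. -/
def charPolyUnder (μ : Flat 𝒜 → Flat 𝒜 → ℝ) (d : ℕ) (X : Flat 𝒜) (t : ℝ) : ℝ :=
  ∑ Y : Flat 𝒜, if Y ≤ X then μ Y X * t ^ (dimS Y.1 - d) else 0

/-- The space of directions `L = ⋂_{H ∈ 𝒜} dir(H)`: the intersection of the kernels of
the linear parts of the defining functionals. -/
def dirL : Submodule ℝ (V n) := ⨅ ℓ : Idx 𝒜, LinearMap.ker ℓ.1.linear

/-- A face is essentially bounded if its image in `ℝ^n / L` is bounded. -/
def EssBounded (F : Face 𝒜) : Prop :=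
  Bornology.IsBounded ((dirL 𝒜).mkQ '' F.carrier)

/-- A hyperplane (zero set of a nonconstant affine functional) is nonempty. -/
lemma hyp_nonempty (ℓ : AffForm n) (h : ℓ.linear ≠ 0) : (hypSet ℓ).Nonempty := by
  obtain ⟨v, hv⟩ : ∃ v, ℓ.linear v ≠ 0 := by
    by_contra hc
    push_neg at hc
    exact h (LinearMap.ext fun v => hc v)
  refine ⟨((-ℓ 0) / (ℓ.linear v)) • v, ?_⟩
  have hdecomp : ℓ (((-ℓ 0) / (ℓ.linear v)) • v)
      = ℓ.linear (((-ℓ 0) / (ℓ.linear v)) • v) + ℓ 0 := by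
    conv_lhs => rw [show ((-ℓ 0) / (ℓ.linear v)) • v = ((-ℓ 0) / (ℓ.linear v)) • v +ᵥ (0 : V n)
      from (add_zero _).symm]
    rw [AffineMap.map_vadd]
    rfl
  show ℓ _ = 0
  rw [hdecomp, LinearMap.map_smul, smul_eq_mul, div_mul_cancel₀ _ hv, neg_add_cancel]

/-- The set of nearest points of `P` to `x`. -/
def nearestPts {n : ℕ} (P : Set (V n)) (x : V n) : Set (V n) :=
  {y ∈ P | ∀ z ∈ P, dist x y ≤ dist x z}

/-- Faces of a polyhedron `P`: `P` itself, or a nonempty subset of the form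
`{x ∈ P | ℓ x = sup_P ℓ}` for a linear functional `ℓ` bounded above on `P`. -/
def IsPolyFace {n : ℕ} (P Q : Set (V n)) : Prop :=
  Q = P ∨ (Q.Nonempty ∧ ∃ ℓ : V n →ₗ[ℝ] ℝ, BddAbove (ℓ '' P) ∧
    Q = {x ∈ P | ℓ x = sSup (ℓ '' P)})

/-- `S_k(P)`: the set of points of `ℝ^n` whose nearest point in `P` lies in the
relative interior of some `k`-dimensional face of `P`. -/
def projSet {n : ℕ} (P : Set (V n)) (k : ℕ) : Set (V n) :=
  {x | ∃ y ∈ nearestPts P x, ∃ Q : Set (V n),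
    IsPolyFace P Q ∧ dimS Q = k ∧ y ∈ intrinsicInterior ℝ Q}

/-- `HasIntrinsicVolumes P v` says that for each `k`, the proportion of the volume of
space occupied by `S_k(P)` exists and equals `v k`, i.e.
`v_k(P) = lim_{R→∞} vol(S_k(P) ∩ B(0,R)) / vol(B(0,R))`. -/
def HasIntrinsicVolumes {n : ℕ} (P : Set (V n)) (v : ℕ → ℝ) : Prop :=
  ∀ k : ℕ, Filter.Tendsto
    (fun R : ℝ =>
      (volume (projSet P k ∩ Metric.ball (0 : V n) R)).toReal /
        (volume (Metric.ball (0 : V n) R)).toReal)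
    Filter.atTop (nhds (v k))

/-! ### Helper material -/

lemma aff_line {n : ℕ} (a : AffForm n) (p z : V n) (e : ℝ) :
    a (p + e • (z - p)) = a p + e * (a z - a p) := by
  have h : p + e • (z - p) = AffineMap.lineMap p z e := by
    rw [AffineMap.lineMap_apply_module']; abel
  rw [h, AffineMap.apply_lineMap, AffineMap.lineMap_apply_module']
  simp; ring

/-- points near `p` on segments keep positivity -/
lemma pos_small (s r : ℝ) (hs : 0 < s) : ∃ e : ℝ, 0 < e ∧ e ≤ 1 ∧
    ∀ e', 0 ≤ e' → e' ≤ e → 0 < s + e' * (r - s) := by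
  refine ⟨min 1 (s / (2 * (|r - s| + 1))), by positivity, min_le_left _ _, ?_⟩
  intro e' h0 h1
  have h2 : e' ≤ s / (2 * (|r - s| + 1)) := h1.trans (min_le_right _ _)
  rw [le_div_iff₀ (by positivity)] at h2
  have h3 : -|r - s| ≤ r - s := neg_abs_le _
  nlinarith [mul_le_mul_of_nonneg_left h3 h0]

lemma vectorSpan_le_of_line {n : ℕ} {C D : Set (V n)} {x : V n} (hx : x ∈ C) (hxD : x ∈ D)
    (h : ∀ z ∈ D, ∃ e : ℝ, 0 < e ∧ x + e • (z - x) ∈ C) :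
    vectorSpan ℝ D ≤ vectorSpan ℝ C := by
  rw [vectorSpan_eq_span_vsub_set_right ℝ hxD, Submodule.span_le]
  rintro _ ⟨z, hz, rfl⟩
  obtain ⟨e, he, hm⟩ := h z hz
  have h1 := vsub_mem_vectorSpan ℝ hm hx
  simp only [vsub_eq_sub, add_sub_cancel_left] at h1 ⊢
  have h2 := Submodule.smul_mem _ e⁻¹ h1
  rwa [smul_smul, inv_mul_cancel₀ he.ne', one_smul] at h2

lemma dimS_mono {n : ℕ} {C D : Set (V n)} (h : C ⊆ D) : dimS C ≤ dimS D :=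
  Submodule.finrank_mono (vectorSpan_mono ℝ h)

lemma dimS_le_of_line {n : ℕ} {C D : Set (V n)} {x : V n} (hx : x ∈ C) (hxD : x ∈ D)
    (h : ∀ z ∈ D, ∃ e : ℝ, 0 < e ∧ x + e • (z - x) ∈ C) : dimS D ≤ dimS C :=
  Submodule.finrank_mono (vectorSpan_le_of_line hx hxD h)

/-- relatively open convex -/
def RO {n : ℕ} (C : Set (V n)) : Prop :=
  Convex ℝ C ∧ ∀ x ∈ C, ∀ y ∈ C, ∃ e : ℝ, 0 < e ∧ x + e • (x - y) ∈ C

/-- star-shaped towards a possibly missing point -/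
def Star {n : ℕ} (p : V n) (C : Set (V n)) : Prop :=
  ∀ z ∈ C, ∀ e : ℝ, 0 < e → e ≤ 1 → p + e • (z - p) ∈ C

def Neg {n : ℕ} (p u : V n) (C : Set (V n)) : Prop := ∀ z ∈ C, inner ℝ u (z - p) ≤ 0

open Classical in
def gg {n : ℕ} (p u : V n) (C : Set (V n)) : ℝ :=
  if C.Nonempty ∧ Star p C ∧ Neg p u C then (-1) ^ dimS C else 0

lemma gg_pos {n : ℕ} {p u : V n} {C : Set (V n)} (h1 : C.Nonempty) (h2 : Star p C)
    (h3 : Neg p u C) : gg p u C = (-1) ^ dimS C := by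
  rw [gg, if_pos ⟨h1, h2, h3⟩]

lemma gg_neg {n : ℕ} {p u : V n} {C : Set (V n)} (h3 : ¬ Neg p u C) : gg p u C = 0 := by
  rw [gg, if_neg (fun h => h3 h.2.2)]

def posP {n : ℕ} (a : AffForm n) : Set (V n) := {z | 0 < a z}
def zerP {n : ℕ} (a : AffForm n) : Set (V n) := {z | a z = 0}
def negP {n : ℕ} (a : AffForm n) : Set (V n) := {z | a z < 0}

lemma conv_line {n : ℕ} {C : Set (V n)} (h : Convex ℝ C) {x z : V n} (hx : x ∈ C) (hz : z ∈ C)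
    {e : ℝ} (h0 : 0 ≤ e) (h1 : e ≤ 1) : x + e • (z - x) ∈ C := by
  have := h hx hz (sub_nonneg.2 h1) h0 (by ring)
  convert this using 1
  module

lemma RO.posP {n : ℕ} {C : Set (V n)} (h : RO C) (a : AffForm n) : RO (C ∩ posP a) := by
  refine ⟨h.1.inter ?_, ?_⟩
  · intro x hx y hy s t hs ht hst
    simp only [CharElts.posP, Set.mem_ofPred_eq] at *
    have e1 : s • x + t • y = x + t • (y - x) := by
      rw [show s = 1 - t by linarith]; module
    have hs1 : s = 1 - t := by linarith
    subst hs1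
    rw [e1, aff_line]
    rcases ht.eq_or_lt with rfl | ht
    · simpa using hx
    · nlinarith [mul_pos ht hy, mul_nonneg hs hx.le]
  · rintro x ⟨hx, hx'⟩ y ⟨hy, hy'⟩
    obtain ⟨e, he, hm⟩ := h.2 x hx y hy
    obtain ⟨e', he', h1, h2⟩ := pos_small (a x) (a (x + e • (x - y))) hx'
    refine ⟨e' * e, by positivity, ?_⟩
    have e1 : x + (e' * e) • (x - y) = x + e' • ((x + e • (x - y)) - x) := by module
    rw [e1]
    refine ⟨conv_line h.1 hx hm he'.le h1, ?_⟩
    simp only [CharElts.posP, Set.mem_ofPred_eq, aff_line a x (x + e • (x - y))]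
    exact h2 e' he'.le le_rfl

lemma posP_neg {n : ℕ} (a : AffForm n) : posP (-a) = negP a := by
  ext z; simp [posP, negP]
lemma zerP_neg {n : ℕ} (a : AffForm n) : zerP (-a) = zerP a := by
  ext z; simp [zerP]
lemma negP_neg {n : ℕ} (a : AffForm n) : negP (-a) = posP a := by
  ext z; simp [posP, negP]

lemma RO.negP {n : ℕ} {C : Set (V n)} (h : RO C) (a : AffForm n) : RO (C ∩ negP a) := by
  rw [← posP_neg]; exact h.posP _

lemma RO.zerP {n : ℕ} {C : Set (V n)} (h : RO C) (a : AffForm n) : RO (C ∩ zerP a) := by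
  refine ⟨h.1.inter ?_, ?_⟩
  · intro x hx y hy s t hs ht hst
    simp only [CharElts.zerP, Set.mem_ofPred_eq] at *
    have e1 : s • x + t • y = x + t • (y - x) := by
      rw [show s = 1 - t by linarith]; module
    rw [e1, aff_line, hx, hy]; simp
  · rintro x ⟨hx, hx'⟩ y ⟨hy, hy'⟩
    obtain ⟨e, he, hm⟩ := h.2 x hx y hy
    refine ⟨e, he, hm, ?_⟩
    simp only [CharElts.zerP, Set.mem_ofPred_eq] at *
    rw [show x + e • (x - y) = x + (-e) • (y - x) by module, aff_line, hx', hy']; simp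

lemma Star.posP {n : ℕ} {p : V n} {C : Set (V n)} (h : Star p C) (a : AffForm n) (hp : 0 ≤ a p) :
    Star p (C ∩ posP a) := by
  rintro z ⟨hz, hz'⟩ e h0 h1
  refine ⟨h z hz e h0 h1, ?_⟩
  simp only [CharElts.posP, Set.mem_ofPred_eq, aff_line] at *
  nlinarith [mul_pos h0 hz', mul_nonneg (sub_nonneg.2 h1) hp]

lemma Star.negP {n : ℕ} {p : V n} {C : Set (V n)} (h : Star p C) (a : AffForm n) (hp : a p ≤ 0) :
    Star p (C ∩ negP a) := by
  rw [← posP_neg]; exact h.posP _ (by simpa using hp)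

lemma Star.zerP {n : ℕ} {p : V n} {C : Set (V n)} (h : Star p C) (a : AffForm n) (hp : a p = 0) :
    Star p (C ∩ zerP a) := by
  rintro z ⟨hz, hz'⟩ e h0 h1
  refine ⟨h z hz e h0 h1, ?_⟩
  simp only [CharElts.zerP, Set.mem_ofPred_eq, aff_line] at *
  simp [hz', hp]

lemma gg_eq_zero {n : ℕ} {p u : V n} (a : AffForm n) (hp : 0 < a p) {D : Set (V n)}
    (hD : ∀ z ∈ D, a z ≤ 0) : gg p u D = 0 := by
  rw [gg, if_neg]
  rintro ⟨⟨z, hz⟩, hs, -⟩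
  obtain ⟨e, he, h1, h2⟩ := pos_small (a p) (a z) hp
  have := hD _ (hs z hz e he h1)
  rw [aff_line] at this
  linarith [h2 e he.le le_rfl]

lemma gg_empty {n : ℕ} (p u : V n) : gg p u ∅ = 0 := by simp [gg]

lemma dimS_posP {n : ℕ} {C : Set (V n)} (hC : Convex ℝ C) (a : AffForm n)
    (hne : (C ∩ posP a).Nonempty) : dimS (C ∩ posP a) = dimS C := by
  obtain ⟨x, hx, hx'⟩ := hne
  refine le_antisymm (dimS_mono Set.inter_subset_left) (dimS_le_of_line (x := x) ⟨hx, hx'⟩ hx ?_)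
  intro z hz
  obtain ⟨e, he, h1, h2⟩ := pos_small (a x) (a z) hx'
  refine ⟨e, he, conv_line hC hx hz he.le h1, ?_⟩
  simpa only [posP, Set.mem_ofPred_eq, aff_line] using h2 e he.le le_rfl

/-- crossing point -/
lemma cross {n : ℕ} {C : Set (V n)} (hC : Convex ℝ C) (a : AffForm n) {x y : V n}
    (hx : x ∈ C) (hy : y ∈ C) (hax : 0 < a x) (hay : a y < 0) :
    ∃ s : ℝ, 0 < s ∧ s < 1 ∧ x + s • (y - x) ∈ C ∩ zerP a := by
  have hd : 0 < a x - a y := by linarith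
  have h1 : a x / (a x - a y) < 1 := by rw [div_lt_one hd]; linarith
  have h0 : 0 < a x / (a x - a y) := by positivity
  refine ⟨a x / (a x - a y), h0, h1, conv_line hC hx hy h0.le h1.le, ?_⟩
  simp only [zerP, Set.mem_ofPred_eq, aff_line]
  field_simp; ring

lemma dimS_zerP {n : ℕ} {C : Set (V n)} (hC : Convex ℝ C) (a : AffForm n)
    (hp : (C ∩ posP a).Nonempty) (hn : (C ∩ negP a).Nonempty) :
    dimS C = dimS (C ∩ zerP a) + 1 := by
  obtain ⟨p, hp, hp'⟩ := hp
  obtain ⟨q, hq, hq'⟩ := hn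
  simp only [posP, negP, Set.mem_ofPred_eq] at hp' hq'
  obtain ⟨s, hs0, hs1, hx⟩ := cross hC a hp hq hp' hq'
  set x := p + s • (q - p) with hxdef
  set W := vectorSpan ℝ (C ∩ zerP a) with hW
  have hax : a x = 0 := hx.2
  -- negative points
  have hneg : ∀ (r : V n), r ∈ C → ∀ y ∈ C, 0 < a r → a y < 0 → 
      y - x ∈ W ⊔ Submodule.span ℝ {r - x} ∧ r - x ∈ W ⊔ Submodule.span ℝ {y - x} := by
    intro r hr y hy har hay
    obtain ⟨t, ht0, ht1, hz⟩ := cross hC a hr hy har hay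
    have h1 : (r + t • (y - r)) - x ∈ W := vsub_mem_vectorSpan ℝ hz hx
    constructor
    · have : y - x = t⁻¹ • ((r + t • (y - r)) - x) + (-(t⁻¹ * (1 - t))) • (r - x) := by
        match_scalars <;> field_simp <;> ring
      rw [this]
      exact Submodule.add_mem_sup (Submodule.smul_mem _ _ h1)
        (Submodule.smul_mem _ _ (Submodule.mem_span_singleton_self _))
    · have h1t : (1 - t) ≠ 0 := by linarith
      have : r - x = (1 - t)⁻¹ • ((r + t • (y - r)) - x) + (-((1 - t)⁻¹ * t)) • (y - x) := by
        match_scalars <;> field_simp <;> ring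
      rw [this]
      exact Submodule.add_mem_sup (Submodule.smul_mem _ _ h1)
        (Submodule.smul_mem _ _ (Submodule.mem_span_singleton_self _))
  have hspan : vectorSpan ℝ C = W ⊔ Submodule.span ℝ {p - x} := by
    apply le_antisymm
    · rw [vectorSpan_eq_span_vsub_set_right ℝ hx.1, Submodule.span_le]
      rintro _ ⟨y, hy, rfl⟩
      simp only [vsub_eq_sub, SetLike.mem_coe]
      rcases lt_trichotomy (a y) 0 with h | h | h
      · exact (hneg p hp y hy hp' h).1
      · exact Submodule.mem_sup_left (vsub_mem_vectorSpan ℝ ⟨hy, h⟩ hx)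
      · have h1 := (hneg y hy q hq h hq').2
        have h2 := (hneg p hp q hq hp' hq').1
        refine (sup_le le_sup_left ?_ : W ⊔ Submodule.span ℝ {q - x} ≤ _) h1
        rw [Submodule.span_singleton_le_iff_mem]; exact h2
    · refine sup_le (vectorSpan_mono ℝ Set.inter_subset_left) ?_
      rw [Submodule.span_singleton_le_iff_mem]
      exact vsub_mem_vectorSpan ℝ hp hx.1
  have hker : W ≤ LinearMap.ker a.linear := by
    rw [hW, vectorSpan_eq_span_vsub_set_right ℝ hx, Submodule.span_le]
    rintro _ ⟨y, hy, rfl⟩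
    simp only [SetLike.mem_coe, LinearMap.mem_ker]
    rw [AffineMap.linearMap_vsub, hax, show a y = 0 from hy.2]; simp
  have hpx : p - x ∉ LinearMap.ker a.linear := by
    rw [LinearMap.mem_ker, ← vsub_eq_sub, AffineMap.linearMap_vsub, hax]
    simpa using hp'.ne'
  have hdisj : W ⊓ Submodule.span ℝ {p - x} = ⊥ := by
    rw [← disjoint_iff, Submodule.disjoint_span_singleton' ]
    · exact fun h => hpx (hker h)
    · rintro h; exact hpx (by rw [h]; exact zero_mem _)
  have h1 := Submodule.finrank_sup_add_finrank_inf_eq W (Submodule.span ℝ {p - x})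
  rw [hdisj, finrank_bot, finrank_span_singleton] at h1
  · unfold dimS; rw [hspan]; simpa using h1
  · rintro h; exact hpx (by rw [h]; exact zero_mem _)

lemma gg_split_pos {n : ℕ} {p u : V n} {C : Set (V n)} (hC : RO C) (hs : Star p C)
    (a : AffForm n) (hp : 0 < a p) :
    gg p u C = gg p u (C ∩ posP a) + gg p u (C ∩ zerP a) + gg p u (C ∩ negP a) := by
  rw [gg_eq_zero a hp (D := C ∩ zerP a) (fun z hz => le_of_eq hz.2),
    gg_eq_zero a hp (D := C ∩ negP a) (fun z hz => le_of_lt hz.2), add_zero, add_zero]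
  have hsm : ∀ z ∈ C, ∃ e : ℝ, 0 < e ∧ p + e • (z - p) ∈ C ∩ posP a := by
    intro z hz
    obtain ⟨e, he, h1, h2⟩ := pos_small (a p) (a z) hp
    refine ⟨e, he, hs z hz e he h1, ?_⟩
    simpa only [posP, Set.mem_ofPred_eq, aff_line] using h2 e he.le le_rfl
  rcases C.eq_empty_or_nonempty with rfl | hne
  · simp
  have hne' : (C ∩ posP a).Nonempty := by
    obtain ⟨z, hz⟩ := hne
    obtain ⟨e, -, h⟩ := hsm z hz
    exact ⟨_, h⟩
  have hN : Neg p u C ↔ Neg p u (C ∩ posP a) := by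
    refine ⟨fun h z hz => h z hz.1, fun h z hz => ?_⟩
    obtain ⟨e, he, hm⟩ := hsm z hz
    have := h _ hm
    rw [add_sub_cancel_left, inner_smul_right] at this
    by_contra hc
    push Not at hc
    nlinarith [mul_pos he hc]
  have e1 := hs.posP a hp.le
  by_cases hN1 : Neg p u C
  · rw [gg_pos hne hs hN1, gg_pos hne' e1 (hN.1 hN1), dimS_posP hC.1 a hne']
  · rw [gg_neg hN1, gg_neg (fun h => hN1 (hN.2 h))]

lemma gg_split {n : ℕ} {p u : V n} {C : Set (V n)} (hC : RO C) (hs : Star p C)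
    (a : AffForm n) :
    gg p u C = gg p u (C ∩ posP a) + gg p u (C ∩ zerP a) + gg p u (C ∩ negP a) := by
  rcases lt_trichotomy (a p) 0 with hp | hp | hp
  · have := gg_split_pos (u := u) hC hs (-a) (by simpa using hp)
    rw [posP_neg, negP_neg, zerP_neg] at this
    rw [this]; ring
  swap
  · exact gg_split_pos hC hs a hp
  have hcov : ∀ z ∈ C, z ∈ C ∩ posP a ∨ z ∈ C ∩ zerP a ∨ z ∈ C ∩ negP a := by
    intro z hz
    rcases lt_trichotomy (a z) 0 with h | h | h
    · exact Or.inr (Or.inr ⟨hz, h⟩)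
    · exact Or.inr (Or.inl ⟨hz, h⟩)
    · exact Or.inl ⟨hz, h⟩
  by_cases hP : (C ∩ posP a).Nonempty
  · by_cases hN : (C ∩ negP a).Nonempty
    · have hZ : (C ∩ zerP a).Nonempty := by
        obtain ⟨x, hx, hx'⟩ := hP
        obtain ⟨y, hy, hy'⟩ := hN
        obtain ⟨s, -, -, h⟩ := cross hC.1 a hx hy hx' hy'
        exact ⟨_, h⟩
      have hne : C.Nonempty := hP.mono Set.inter_subset_left
      have s1 := hs.posP a hp.ge
      have s2 := hs.zerP a hp
      have s3 := hs.negP a hp.le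
      have d1 := dimS_posP hC.1 a hP
      have d2 := dimS_zerP hC.1 a hP hN
      have d3 : dimS (C ∩ negP a) = dimS C := by
        rw [← posP_neg] at hN ⊢; exact dimS_posP hC.1 _ hN
      have n1 : Neg p u C ↔ Neg p u (C ∩ posP a) ∧ Neg p u (C ∩ zerP a) ∧ Neg p u (C ∩ negP a) := by
        constructor
        · exact fun h => ⟨fun z hz => h z hz.1, fun z hz => h z hz.1, fun z hz => h z hz.1⟩
        · rintro ⟨h1, h2, h3⟩ z hz
          rcases hcov z hz with h | h | h
          exacts [h1 z h, h2 z h, h3 z h]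
      have key : ∀ (D : Set (V n)), D.Nonempty → 
          (∀ w ∈ D, ∀ z ∈ C ∩ zerP a, ∀ e : ℝ, 0 < e → e ≤ 1 → z + e • (w - z) ∈ D) →
          Neg p u D → Neg p u (C ∩ zerP a) := by
        rintro D ⟨w, hw⟩ hD hnD z hz
        by_contra hc
        push Not at hc
        obtain ⟨e, he, h1, h2⟩ := pos_small _ (inner ℝ u (w - p)) hc
        have h3 := hnD _ (hD w hw z hz e he h1)
        have h4 := h2 e he.le le_rfl
        rw [show z + e • (w - z) - p = (z - p) + e • ((w - p) - (z - p)) by module,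
          inner_add_right, inner_smul_right, inner_sub_right u (w - p) (z - p)] at h3
        linarith
      have n2 : Neg p u (C ∩ posP a) → Neg p u (C ∩ zerP a) := by
        apply key _ hP
        rintro w ⟨hw, hw'⟩ z ⟨hz, hz'⟩ e h0 h1
        refine ⟨conv_line hC.1 hz hw h0.le h1, ?_⟩
        simp only [posP, zerP, Set.mem_ofPred_eq, aff_line] at *
        rw [hz']; simp; positivity
      have n3 : Neg p u (C ∩ negP a) → Neg p u (C ∩ zerP a) := by
        apply key _ hN
        rintro w ⟨hw, hw'⟩ z ⟨hz, hz'⟩ e h0 h1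
        refine ⟨conv_line hC.1 hz hw h0.le h1, ?_⟩
        simp only [negP, zerP, Set.mem_ofPred_eq, aff_line] at *
        rw [hz']; simp; exact mul_neg_of_pos_of_neg h0 hw'
      have n4 : Neg p u (C ∩ zerP a) → Neg p u (C ∩ posP a) ∨ Neg p u (C ∩ negP a) := by
        intro h
        by_contra hc
        simp only [Neg, not_or, not_forall, not_le] at hc
        obtain ⟨⟨x, hx, hx1⟩, ⟨y, hy, hy1⟩⟩ := hc
        obtain ⟨s, h0, h1, hz⟩ := cross hC.1 a hx.1 hy.1 hx.2 hy.2
        have h3 := h _ hz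
        rw [show x + s • (y - x) - p = (1 - s) • (x - p) + s • (y - p) by module,
          inner_add_right, inner_smul_right, inner_smul_right] at h3
        nlinarith [mul_pos h0 hy1, mul_pos (sub_pos.2 h1) hx1]
      by_cases b1 : Neg p u (C ∩ posP a) <;> by_cases b3 : Neg p u (C ∩ negP a)
      · have b2 := n2 b1
        rw [gg_pos hne hs (n1.2 ⟨b1, b2, b3⟩), gg_pos hP s1 b1, gg_pos hZ s2 b2, gg_pos hN s3 b3,
          d1, d3, d2, pow_succ]
        ring
      · have b2 := n2 b1
        rw [gg_neg (fun h => b3 (n1.1 h).2.2), gg_pos hP s1 b1, gg_pos hZ s2 b2, gg_neg b3,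
          d1, d2, pow_succ]
        ring
      · have b2 := n3 b3
        rw [gg_neg (fun h => b1 (n1.1 h).1), gg_neg b1, gg_pos hZ s2 b2, gg_pos hN s3 b3,
          d3, d2, pow_succ]
        ring
      · have b2 : ¬ Neg p u (C ∩ zerP a) := fun h => (n4 h).elim b1 b3
        rw [gg_neg (fun h => b1 (n1.1 h).1), gg_neg b1, gg_neg b2, gg_neg b3]
        ring
    · have hZ : ¬ (C ∩ zerP a).Nonempty := by
        rintro ⟨z, hz⟩
        obtain ⟨x, hx⟩ := hP
        obtain ⟨e, he, hm⟩ := hC.2 z hz.1 x hx.1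
        refine hN ⟨_, hm, ?_⟩
        have h0 : a z = 0 := hz.2
        have h1 : 0 < a x := hx.2
        simp only [negP, Set.mem_ofPred_eq]
        rw [show z + e • (z - x) = z + (-e) • (x - z) by module, aff_line, h0]
        nlinarith [mul_pos he h1]
      have hCP : C ∩ posP a = C := by
        apply Set.inter_eq_left.2
        intro z hz
        rcases hcov z hz with h | h | h
        exacts [h.2, (hZ ⟨z, h⟩).elim, (hN ⟨z, h⟩).elim]
      rw [Set.not_nonempty_iff_eq_empty] at hZ hN
      rw [hZ, hN, hCP, gg_empty]; simp
  · by_cases hZ : (C ∩ zerP a).Nonempty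
    · have hN : ¬ (C ∩ negP a).Nonempty := by
        rintro ⟨x, hx⟩
        obtain ⟨z, hz⟩ := hZ
        obtain ⟨e, he, hm⟩ := hC.2 z hz.1 x hx.1
        refine hP ⟨_, hm, ?_⟩
        have h0 : a z = 0 := hz.2
        have h1 : a x < 0 := hx.2
        simp only [posP, Set.mem_ofPred_eq]
        rw [show z + e • (z - x) = z + (-e) • (x - z) by module, aff_line, h0]
        nlinarith [mul_neg_of_pos_of_neg he h1]
      have hCP : C ∩ zerP a = C := by
        apply Set.inter_eq_left.2
        intro z hz
        rcases hcov z hz with h | h | h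
        exacts [(hP ⟨z, h⟩).elim, h.2, (hN ⟨z, h⟩).elim]
      rw [Set.not_nonempty_iff_eq_empty] at hP hN
      rw [hP, hN, hCP, gg_empty]; simp
    · have hCP : C ∩ negP a = C := by
        apply Set.inter_eq_left.2
        intro z hz
        rcases hcov z hz with h | h | h
        exacts [(hP ⟨z, h⟩).elim, (hZ ⟨z, h⟩).elim, h.2]
      rw [Set.not_nonempty_iff_eq_empty] at hP hZ
      rw [hP, hZ, hCP, gg_empty]; simp

def sgnP {n : ℕ} (a : AffForm n) (s : SignType) : Set (V n) := {z | SignType.sign (a z) = s}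

lemma sgnP_one {n : ℕ} (a : AffForm n) : sgnP a 1 = posP a := by
  ext z; simp [sgnP, posP, sign_eq_one_iff]
lemma sgnP_zero {n : ℕ} (a : AffForm n) : sgnP a 0 = zerP a := by
  ext z; simp [sgnP, zerP]
lemma sgnP_neg {n : ℕ} (a : AffForm n) : sgnP a (-1) = negP a := by
  ext z; simp [sgnP, negP, sign_eq_neg_one_iff]

lemma sum_signType (f : SignType → ℝ) : ∑ s, f s = f 1 + f 0 + f (-1) := by
  have : (Finset.univ : Finset SignType) = {1, 0, -1} := by decide
  rw [this, Finset.sum_insert (by decide), Finset.sum_insert (by decide), Finset.sum_singleton]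
  ring

lemma piece {n : ℕ} {p u : V n} {C : Set (V n)} (hC : RO C) (hs : Star p C)
    (a : AffForm n) (s : SignType) :
    (RO (C ∩ sgnP a s) ∧ Star p (C ∩ sgnP a s)) ∨ ∀ D ⊆ C ∩ sgnP a s, gg p u D = 0 := by
  have hRO : RO (C ∩ sgnP a s) := by
    rcases s.trichotomy with rfl | rfl | rfl
    · rw [sgnP_neg]; exact hC.negP a
    · rw [sgnP_zero]; exact hC.zerP a
    · rw [sgnP_one]; exact hC.posP a
  rcases s.trichotomy with rfl | rfl | rfl
  · rw [sgnP_neg] at *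
    by_cases h : a p ≤ 0
    · exact Or.inl ⟨hRO, hs.negP a h⟩
    · exact Or.inr fun D hD => gg_eq_zero a (not_le.1 h) (fun z hz => le_of_lt (hD hz).2)
  · rw [sgnP_zero] at *
    rcases lt_trichotomy (a p) 0 with h | h | h
    · exact Or.inr fun D hD => gg_eq_zero (-a) (by simpa using h)
        (fun z hz => by simpa using ge_of_eq (hD hz).2)
    · exact Or.inl ⟨hRO, hs.zerP a h⟩
    · exact Or.inr fun D hD => gg_eq_zero a h (fun z hz => le_of_eq (hD hz).2)
  · rw [sgnP_one] at *
    by_cases h : 0 ≤ a p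
    · exact Or.inl ⟨hRO, hs.posP a h⟩
    · exact Or.inr fun D hD => gg_eq_zero (-a) (by simpa using h)
        (fun z hz => by simpa using le_of_lt (hD hz).2)

lemma gg_sum {n : ℕ} (p u : V n) (ι : Type) [Fintype ι] [DecidableEq ι] : ∀ (a : ι → AffForm n) (C : Set (V n)),
    RO C → Star p C →
    gg p u C = ∑ σ : ι → SignType, gg p u (C ∩ {z | ∀ i, SignType.sign (a i z) = σ i}) := by
  classical
  suffices H : ∀ (a : ι → AffForm n) (C : Set (V n)), RO C → Star p C →
      ∀ (h : Fintype (ι → SignType)),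
    gg p u C = ∑ σ : ι → SignType, gg p u (C ∩ {z | ∀ i, SignType.sign (a i z) = σ i}) from
    fun a C h1 h2 => H a C h1 h2 _
  refine Fintype.induction_empty_option (P := fun ι _ => ∀ (a : ι → AffForm n) (C : Set (V n)), RO C → Star p C →
      ∀ (h : Fintype (ι → SignType)),
    gg p u C = ∑ σ : ι → SignType, gg p u (C ∩ {z | ∀ i, SignType.sign (a i z) = σ i})) ?_ ?_ ?_ ι
  · intro α β _ e ih a C h1 h2 hf
    have : Fintype α := Fintype.ofEquiv _ e.symm
    rw [ih (a ∘ e) C h1 h2 inferInstance]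
    refine Fintype.sum_equiv (e.arrowCongr (Equiv.refl _)) _ _ ?_
    intro σ
    congr 2
    ext z
    simp [Equiv.arrowCongr, e.symm.forall_congr_left]
  · intro a C h1 h2 hf
    simp
  · intro α _ ih a C h1 h2 hf
    rw [Fintype.sum_equiv (Equiv.piOptionEquivProd) _
      (fun q : SignType × (α → SignType) => gg p u ((C ∩ sgnP (a none) q.1) ∩ 
        {z | ∀ i, SignType.sign (a (some i) z) = q.2 i})), Fintype.sum_prod_type]
    · rw [gg_split h1 h2 (a none), ← sgnP_one, ← sgnP_zero, ← sgnP_neg, 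
        ← sum_signType (fun s => gg p u (C ∩ sgnP (a none) s))]
      refine Finset.sum_congr rfl fun s _ => ?_
      rcases piece (u := u) h1 h2 (a none) s with h | h
      · exact ih (fun i => a (some i)) _ h.1 h.2 _
      · rw [h _ subset_rfl, Finset.sum_eq_zero]
        intro σ _
        exact h _ Set.inter_subset_left
    · intro σ
      congr 1
      ext z
      simp [Option.forall, sgnP, Set.inter_assoc, Equiv.piOptionEquivProd]

lemma aff_cont {n : ℕ} (a : AffForm n) : Continuous a := a.continuous_of_finiteDimensional

/-- closed sign cell -/
def clSet {n : ℕ} (𝒜 : Finset (AffForm n)) (σ : Idx 𝒜 → SignType) : Set (V n) :=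
  {z | ∀ ℓ : Idx 𝒜, 0 ≤ (σ ℓ : ℝ) * ℓ.1 z ∧ (σ ℓ = 0 → ℓ.1 z = 0)}

lemma sign_iff (s : SignType) (r : ℝ) :
    SignType.sign r = s ↔ (s = 0 ∧ r = 0) ∨ (s ≠ 0 ∧ 0 < (s : ℝ) * r) := by
  rcases s.trichotomy with rfl | rfl | rfl
  · simp [sign_eq_neg_one_iff]
  · simp
  · simp [sign_eq_one_iff]

lemma faceSet_sub_clSet {n : ℕ} (𝒜 : Finset (AffForm n)) (σ : Idx 𝒜 → SignType) :
    faceSet 𝒜 σ ⊆ clSet 𝒜 σ := by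
  intro z hz ℓ
  rcases (sign_iff _ _).1 (hz ℓ) with ⟨h, h'⟩ | ⟨h, h'⟩
  · simp [h, h']
  · exact ⟨h'.le, fun h0 => (h h0).elim⟩

lemma clSet_star {n : ℕ} (𝒜 : Finset (AffForm n)) (σ : Idx 𝒜 → SignType) {p : V n}
    (hp : p ∈ clSet 𝒜 σ) : Star p (faceSet 𝒜 σ) := by
  intro z hz e h0 h1 ℓ
  rw [sign_iff, aff_line]
  rcases (sign_iff _ _).1 (hz ℓ) with ⟨h, h'⟩ | ⟨h, h'⟩
  · left
    refine ⟨h, ?_⟩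
    rw [(hp ℓ).2 h, h']; simp
  · right
    refine ⟨h, ?_⟩
    have := (hp ℓ).1
    nlinarith [mul_pos h0 h', mul_nonneg (sub_nonneg.2 h1) this]

lemma clSet_closed {n : ℕ} (𝒜 : Finset (AffForm n)) (σ : Idx 𝒜 → SignType) :
    IsClosed (clSet 𝒜 σ) := by
  have : clSet 𝒜 σ = ⋂ ℓ : Idx 𝒜, ({z | 0 ≤ (σ ℓ : ℝ) * ℓ.1 z} ∩ {z | σ ℓ = 0 → ℓ.1 z = 0}) := by
    ext z; simp [clSet]
  rw [this]
  refine isClosed_iInter fun ℓ => (isClosed_le continuous_const ?_).inter ?_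
  · exact continuous_const.mul (aff_cont _)
  · by_cases h : σ ℓ = 0
    · simpa [h] using isClosed_eq (aff_cont ℓ.1) continuous_const
    · simp [h]

lemma star_mem_closure {n : ℕ} {p : V n} {C : Set (V n)} (hs : Star p C) (hne : C.Nonempty) :
    p ∈ closure C := by
  obtain ⟨z, hz⟩ := hne
  have hc : Continuous fun e : ℝ => p + e • (z - p) := by fun_prop
  have h1 : Filter.Tendsto (fun e : ℝ => p + e • (z - p)) (nhdsWithin 0 (Set.Ioi 0)) (nhds p) := by
    have := hc.tendsto 0
    simp only [zero_smul, add_zero] at this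
    exact this.mono_left nhdsWithin_le_nhds
  refine mem_closure_of_tendsto h1 ?_
  filter_upwards [Ioc_mem_nhdsGT (zero_lt_one' ℝ)] with e he
  exact hs z hz e he.1 he.2

lemma closure_faceSet {n : ℕ} (𝒜 : Finset (AffForm n)) (σ : Idx 𝒜 → SignType)
    (hne : (faceSet 𝒜 σ).Nonempty) : closure (faceSet 𝒜 σ) = clSet 𝒜 σ := by
  apply subset_antisymm
  · exact closure_minimal (faceSet_sub_clSet 𝒜 σ) (clSet_closed 𝒜 σ)
  · intro z hz
    exact star_mem_closure (clSet_star 𝒜 σ hz) hne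

lemma clSet_convex {n : ℕ} (𝒜 : Finset (AffForm n)) (σ : Idx 𝒜 → SignType) :
    Convex ℝ (clSet 𝒜 σ) := by
  intro x hx y hy s t hs ht hst ℓ
  have e1 : s • x + t • y = x + t • (y - x) := by
    rw [show s = 1 - t by linarith]; module
  obtain rfl : s = 1 - t := by linarith
  rw [e1, aff_line]
  constructor
  · nlinarith [mul_nonneg hs (hx ℓ).1, mul_nonneg ht (hy ℓ).1]
  · intro h
    rw [(hx ℓ).2 h, (hy ℓ).2 h]; simp

/-- nearest points -/
lemma mem_nearest {n : ℕ} {K : Set (V n)} (hK : Convex ℝ K) {x y : V n} :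
    y ∈ nearestPts K x ↔ y ∈ K ∧ ∀ z ∈ K, inner ℝ (x - y) (z - y) ≤ 0 := by
  refine and_congr_right fun hy => ?_
  rw [← norm_eq_iInf_iff_real_inner_le_zero hK hy]
  have : Nonempty K := ⟨⟨y, hy⟩⟩
  have hb : BddBelow (Set.range fun w : K => ‖x - w‖) := ⟨0, by rintro _ ⟨w, rfl⟩; positivity⟩
  simp only [dist_eq_norm]
  constructor
  · intro h
    exact le_antisymm (le_ciInf fun w => h w.1 w.2) (ciInf_le hb ⟨y, hy⟩)
  · intro h z hz
    rw [h]
    exact ciInf_le hb ⟨z, hz⟩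

lemma nearest_exists {n : ℕ} {K : Set (V n)} (hK : Convex ℝ K) (hc : IsClosed K)
    (hne : K.Nonempty) (x : V n) : ∃ y, y ∈ nearestPts K x := by
  obtain ⟨y, hy, h⟩ := exists_norm_eq_iInf_of_complete_convex hne hc.isComplete hK x
  exact ⟨y, (mem_nearest hK).2 ⟨hy, (norm_eq_iInf_iff_real_inner_le_zero hK hy).1 h⟩⟩

lemma nearest_lip {n : ℕ} {K : Set (V n)} (hK : Convex ℝ K) {x x' y y' : V n}
    (h : y ∈ nearestPts K x) (h' : y' ∈ nearestPts K x') : ‖y - y'‖ ≤ ‖x - x'‖ := by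
  rw [mem_nearest hK] at h h'
  have h1 := h.2 y' h'.1
  have h2 := h'.2 y h.1
  have h3 : ‖y - y'‖ ^ 2 ≤ inner ℝ (x - x') (y - y') := by
    rw [← real_inner_self_eq_norm_sq]
    simp only [inner_sub_left, inner_sub_right] at *
    linarith
  have h4 := real_inner_le_norm (x - x') (y - y')
  rcases (norm_nonneg (y - y')).eq_or_lt with h5 | h5
  · rw [← h5]; positivity
  · nlinarith

lemma nearest_unique {n : ℕ} {K : Set (V n)} (hK : Convex ℝ K) {x y y' : V n}
    (h : y ∈ nearestPts K x) (h' : y' ∈ nearestPts K x) : y = y' := by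
  have := nearest_lip hK h h'
  simp only [sub_self, norm_zero] at this
  exact sub_eq_zero.1 (norm_le_zero_iff.1 this)

open Classical in
def np {n : ℕ} (K : Set (V n)) (x : V n) : V n :=
  if h : ∃ y, y ∈ nearestPts K x then h.choose else 0

lemma np_spec {n : ℕ} {K : Set (V n)} (hK : Convex ℝ K) (hc : IsClosed K)
    (hne : K.Nonempty) (x : V n) : np K x ∈ nearestPts K x := by
  have h := nearest_exists hK hc hne x
  rw [np, dif_pos h]
  exact h.choose_spec

lemma np_cont {n : ℕ} {K : Set (V n)} (hK : Convex ℝ K) (hc : IsClosed K)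
    (hne : K.Nonempty) : Continuous (np K) := by
  have : LipschitzWith 1 (np K) := by
    refine LipschitzWith.of_dist_le_mul fun x x' => ?_
    simp only [NNReal.coe_one, one_mul, dist_eq_norm]
    exact nearest_lip hK (np_spec hK hc hne x) (np_spec hK hc hne x')
  exact this.continuous

def sv {n : ℕ} (𝒜 : Finset (AffForm n)) (y : V n) : Idx 𝒜 → SignType :=
  fun ℓ => SignType.sign (ℓ.1 y)

/-- dimension of the cell containing `y` -/
def dimAt {n : ℕ} (𝒜 : Finset (AffForm n)) (y : V n) : ℕ := dimS (faceSet 𝒜 (sv 𝒜 y))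

lemma mem_cell {n : ℕ} (𝒜 : Finset (AffForm n)) (y : V n) : y ∈ faceSet 𝒜 (sv 𝒜 y) :=
  fun _ => rfl

/-- all points of the supporting flat, slightly moved towards `y`, are in the cell of `y` -/
lemma cell_line {n : ℕ} (𝒜 : Finset (AffForm n)) (y z : V n)
    (hz : ∀ ℓ : Idx 𝒜, ℓ.1 y = 0 → ℓ.1 z = 0) :
    ∃ e : ℝ, 0 < e ∧ y + e • (z - y) ∈ faceSet 𝒜 (sv 𝒜 y) := by
  have hev : ∀ᶠ e : ℝ in nhdsWithin 0 (Set.Ioi 0), ∀ ℓ : Idx 𝒜,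
      SignType.sign (ℓ.1 (y + e • (z - y))) = sv 𝒜 y ℓ := by
    rw [Filter.eventually_all]
    intro ℓ
    by_cases h : ℓ.1 y = 0
    · refine Filter.Eventually.of_forall fun e => ?_
      rw [aff_line, h, hz ℓ h]; simp [sv, h]
    · have hs : 0 < (sv 𝒜 y ℓ : ℝ) * ℓ.1 y := by
        rcases (sign_iff (sv 𝒜 y ℓ) (ℓ.1 y)).1 rfl with ⟨_, h'⟩ | ⟨_, h'⟩
        exacts [(h h').elim, h']
      have h0 : sv 𝒜 y ℓ ≠ 0 := by simpa [sv] using h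
      obtain ⟨e, he, h1, h2⟩ := pos_small _ ((sv 𝒜 y ℓ : ℝ) * ℓ.1 z) hs
      filter_upwards [Ioc_mem_nhdsGT he] with e' he'
      rw [sign_iff, aff_line]
      refine Or.inr ⟨h0, ?_⟩
      have := h2 e' he'.1.le he'.2
      linarith
  obtain ⟨e, he, hm⟩ := (hev.and self_mem_nhdsWithin).exists
  exact ⟨e, hm, he⟩

lemma cell_sub_cl {n : ℕ} (𝒜 : Finset (AffForm n)) {σ : Idx 𝒜 → SignType} {y : V n}
    (hy : y ∈ clSet 𝒜 σ) : faceSet 𝒜 (sv 𝒜 y) ⊆ clSet 𝒜 σ := by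
  intro z hz ℓ
  have h := hz ℓ
  have hyl := hy ℓ
  simp only [sv] at h
  rcases (σ ℓ).trichotomy with hs | hs | hs
  · simp only [hs, SignType.coe_neg_one, neg_mul, one_mul] at *
    refine ⟨?_, by simp⟩
    by_contra hc
    have h1 : SignType.sign (ℓ.1 z) = 1 := sign_eq_one_iff.2 (by linarith)
    rw [h1] at h
    have := sign_eq_one_iff.1 h.symm
    linarith [hyl.1]
  · have h2 := hyl.2 hs
    rw [h2, sign_zero, sign_eq_zero_iff] at h
    simp [h]
  · simp only [hs, SignType.coe_one, one_mul] at *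
    refine ⟨?_, by simp⟩
    by_contra hc
    have h1 : SignType.sign (ℓ.1 z) = -1 := sign_eq_neg_one_iff.2 (by linarith)
    rw [h1] at h
    have := sign_eq_neg_one_iff.1 h.symm
    linarith [hyl.1]

lemma relint_extend {n : ℕ} {Q : Set (V n)} {y z : V n} (hy : y ∈ intrinsicInterior ℝ Q)
    (hz : z ∈ Q) : ∃ e : ℝ, 0 < e ∧ y + (-e) • (z - y) ∈ Q := by
  rw [mem_intrinsicInterior] at hy
  obtain ⟨y', hy', rfl⟩ := hy
  let z' : affineSpan ℝ Q := ⟨z, subset_affineSpan ℝ Q hz⟩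
  have hmem : ∀ e : ℝ, (y' : V n) + (-e) • (z - y') ∈ affineSpan ℝ Q := by
    intro e
    have := AffineMap.lineMap_mem (-e) y'.2 z'.2
    rw [AffineMap.lineMap_apply_module'] at this
    rwa [add_comm]
  have hc : Continuous fun e : ℝ => (⟨(y' : V n) + (-e) • (z - y'), hmem e⟩ : affineSpan ℝ Q) := by
    apply Continuous.subtype_mk
    fun_prop
  have h0 : (⟨(y' : V n) + (-0 : ℝ) • (z - y'), hmem 0⟩ : affineSpan ℝ Q) = y' := by
    apply Subtype.ext; simp
  have hn : ∀ᶠ e : ℝ in nhds 0, (⟨(y' : V n) + (-e) • (z - y'), hmem e⟩ : affineSpan ℝ Q) ∈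
      (Subtype.val ⁻¹' Q : Set (affineSpan ℝ Q)) := by
    have := hc.tendsto 0
    rw [h0] at this
    exact this (mem_interior_iff_mem_nhds.1 hy')
  obtain ⟨e, he, hm⟩ := ((hn.filter_mono nhdsWithin_le_nhds).and
    (self_mem_nhdsWithin : Set.Ioi (0 : ℝ) ∈ nhdsWithin 0 (Set.Ioi 0))).exists
  exact ⟨e, hm, he⟩

/-- zero set as an affine subspace -/
def zeroSub {n : ℕ} (a : AffForm n) : AffineSubspace ℝ (V n) :=
  (AffineSubspace.mk' (0 : ℝ) ⊥).comap a

lemma mem_zeroSub {n : ℕ} (a : AffForm n) (z : V n) : z ∈ zeroSub a ↔ a z = 0 := by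
  simp [zeroSub, AffineSubspace.mem_comap]

lemma polyFace_iff {n : ℕ} (𝒜 : Finset (AffForm n)) {σ : Idx 𝒜 → SignType} {y : V n}
    (hy : y ∈ clSet 𝒜 σ) (k : ℕ) :
    (∃ Q : Set (V n), IsPolyFace (clSet 𝒜 σ) Q ∧ dimS Q = k ∧ y ∈ intrinsicInterior ℝ Q) ↔
      dimAt 𝒜 y = k := by
  constructor
  · rintro ⟨Q, hQ, rfl, hyQ⟩
    have hyQ' : y ∈ Q := intrinsicInterior_subset hyQ
    have hQP : Q ⊆ clSet 𝒜 σ := by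
      rcases hQ with rfl | ⟨-, L, -, rfl⟩
      · exact subset_rfl
      · exact fun z hz => hz.1
    apply le_antisymm
    · apply dimS_mono
      rcases hQ with rfl | ⟨-, L, hb, rfl⟩
      · exact cell_sub_cl 𝒜 hy
      · intro g hg
        have hgP := cell_sub_cl 𝒜 hy hg
        refine ⟨hgP, le_antisymm (le_csSup hb ⟨g, hgP, rfl⟩) ?_⟩
        obtain ⟨e, he, hm⟩ := cell_line 𝒜 y (y + (-1 : ℝ) • (g - y)) (by
          intro ℓ h
          have h1 : ℓ.1 g = 0 := by
            have := hg ℓ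
            rw [sv, h, sign_zero, sign_eq_zero_iff] at this
            exact this
          rw [aff_line, h, h1]; simp)
        have h2 : L (y + e • (y + (-1 : ℝ) • (g - y) - y)) ≤ sSup (L '' clSet 𝒜 σ) :=
          le_csSup hb ⟨_, cell_sub_cl 𝒜 hy hm, rfl⟩
        rw [← hyQ'.2] at h2 ⊢
        simp only [map_add, map_smul, map_sub, smul_eq_mul] at h2
        nlinarith
    · refine dimS_le_of_line (mem_cell 𝒜 y) hyQ' fun z hz => cell_line 𝒜 y z ?_
      intro ℓ h
      obtain ⟨e, he, hm⟩ := relint_extend hyQ hz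
      have h1 := hQP hz ℓ
      have h2 := (hQP hm ℓ).1
      rw [aff_line, h] at h2
      by_cases hs : σ ℓ = 0
      · exact h1.2 hs
      · have h3 : (σ ℓ : ℝ) * ℓ.1 z = 0 := by
          refine le_antisymm ?_ h1.1
          by_contra hc
          push Not at hc
          nlinarith [mul_pos he hc]
        rcases mul_eq_zero.1 h3 with h4 | h4
        · exfalso
          rcases (σ ℓ).trichotomy with h5 | h5 | h5 <;> simp [h5] at h4 hs
        · exact h4
  · rintro rfl
    classical
    set Q : Set (V n) := {z | z ∈ clSet 𝒜 σ ∧ ∀ ℓ : Idx 𝒜, ℓ.1 y = 0 → ℓ.1 z = 0} with hQ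
    have hyQ : y ∈ Q := ⟨hy, fun _ h => h⟩
    have hcQ : faceSet 𝒜 (sv 𝒜 y) ⊆ Q := by
      intro z hz
      refine ⟨cell_sub_cl 𝒜 hy hz, fun ℓ h => ?_⟩
      have := hz ℓ
      rw [sv, h, sign_zero, sign_eq_zero_iff] at this
      exact this
    refine ⟨Q, Or.inr ⟨⟨y, hyQ⟩, ?_⟩, ?_, ?_⟩
    · let L : V n →ₗ[ℝ] ℝ := -∑ ℓ : Idx 𝒜, if ℓ.1 y = 0 then (σ ℓ : ℝ) • ℓ.1.linear else 0
      have hL : ∀ z, L z = L y - ∑ ℓ : Idx 𝒜, if ℓ.1 y = 0 then (σ ℓ : ℝ) * ℓ.1 z else 0 := by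
        intro z
        have h1 : L z - L y = L (z - y) := (map_sub _ _ _).symm
        have h2 : L (z - y) = - ∑ ℓ : Idx 𝒜, if ℓ.1 y = 0 then (σ ℓ : ℝ) * ℓ.1 z else 0 := by
          simp only [L, LinearMap.neg_apply, LinearMap.sum_apply]
          congr 1
          refine Finset.sum_congr rfl fun ℓ _ => ?_
          split_ifs with h
          · rw [LinearMap.smul_apply, ← vsub_eq_sub, AffineMap.linearMap_vsub, h]; simp
          · simp
        linarith
      have hnn : ∀ z ∈ clSet 𝒜 σ, ∀ ℓ ∈ (Finset.univ : Finset (Idx 𝒜)),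
          0 ≤ (if ℓ.1 y = 0 then (σ ℓ : ℝ) * ℓ.1 z else 0) := by
        intro z hz ℓ _
        split_ifs
        · exact (hz ℓ).1
        · exact le_rfl
      have hle : ∀ z ∈ clSet 𝒜 σ, L z ≤ L y := by
        intro z hz
        rw [hL z]
        have := Finset.sum_nonneg (hnn z hz)
        linarith
      have hg : IsGreatest (L '' clSet 𝒜 σ) (L y) :=
        ⟨⟨y, hy, rfl⟩, by rintro _ ⟨z, hz, rfl⟩; exact hle z hz⟩
      refine ⟨L, ⟨_, hg.2⟩, ?_⟩
      rw [hg.csSup_eq]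
      ext z
      simp only [hQ, Set.mem_ofPred_eq]
      refine and_congr_right fun hz => ?_
      have h3 : L z = L y ↔ ∑ ℓ : Idx 𝒜, (if ℓ.1 y = 0 then (σ ℓ : ℝ) * ℓ.1 z else 0) = 0 := by
        rw [hL z]; constructor <;> intro h <;> linarith
      rw [h3, Finset.sum_eq_zero_iff_of_nonneg (hnn z hz)]
      constructor
      · intro h ℓ _
        split_ifs with h'
        · rw [h ℓ h', mul_zero]
        · rfl
      · intro h ℓ h'
        have h4 := h ℓ (Finset.mem_univ _)
        rw [if_pos h'] at h4
        rcases mul_eq_zero.1 h4 with h5 | h5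
        · apply (hz ℓ).2
          rcases (σ ℓ).trichotomy with h6 | h6 | h6
          · simp [h6] at h5
          · exact h6
          · simp [h6] at h5
        · exact h5
    · exact le_antisymm (dimS_le_of_line (mem_cell 𝒜 y) hyQ fun z hz => cell_line 𝒜 y z hz.2)
        (dimS_mono hcQ)
    · rw [mem_intrinsicInterior]
      refine ⟨⟨y, subset_affineSpan ℝ Q hyQ⟩, ?_, rfl⟩
      rw [mem_interior_iff_mem_nhds]
      have hU : ∀ᶠ z in nhds y, ∀ ℓ : Idx 𝒜, ℓ.1 y ≠ 0 → SignType.sign (ℓ.1 z) = sv 𝒜 y ℓ := by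
        rw [Filter.eventually_all]
        intro ℓ
        by_cases h : ℓ.1 y = 0
        · exact Filter.Eventually.of_forall fun z h' => (h' h).elim
        · rcases lt_or_gt_of_ne h with h1 | h1
          · filter_upwards [(aff_cont ℓ.1).continuousAt.eventually_lt continuousAt_const h1]
              with z hz _
            rw [sv, sign_neg h1, sign_neg hz]
          · filter_upwards [continuousAt_const.eventually_lt (aff_cont ℓ.1).continuousAt h1]
              with z hz _
            rw [sv, sign_pos h1, sign_pos hz]
      have hc : Filter.Tendsto (Subtype.val : affineSpan ℝ Q → V n)
          (nhds ⟨y, subset_affineSpan ℝ Q hyQ⟩) (nhds y) := continuous_subtype_val.tendsto _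
      filter_upwards [hc.eventually hU] with w hw
      apply hcQ
      intro ℓ
      by_cases h : ℓ.1 y = 0
      · have hle : affineSpan ℝ Q ≤ zeroSub ℓ.1 := by
          rw [affineSpan_le]
          intro z hz
          exact (mem_zeroSub _ _).2 (hz.2 ℓ h)
        have := (mem_zeroSub _ _).1 (hle w.2)
        rw [this, sv, h]
      · exact hw ℓ h

lemma mem_projSet {n : ℕ} (𝒜 : Finset (AffForm n)) (F : Face 𝒜) (x : V n) (k : ℕ) :
    x ∈ projSet (closure (Face.carrier 𝒜 F)) k ↔ dimAt 𝒜 (np (closure (Face.carrier 𝒜 F)) x) = k := by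
  have hne : (closure (Face.carrier 𝒜 F)).Nonempty := F.nonempty.closure
  have e : closure (Face.carrier 𝒜 F) = clSet 𝒜 F.sgn := closure_faceSet 𝒜 F.sgn F.nonempty
  rw [e] at hne ⊢
  have hs := np_spec (clSet_convex 𝒜 F.sgn) (clSet_closed 𝒜 F.sgn) hne x
  rw [← polyFace_iff 𝒜 hs.1]
  constructor
  · rintro ⟨y, hy, h⟩
    rwa [nearest_unique (clSet_convex 𝒜 F.sgn) hs hy]
  · exact fun h => ⟨_, hs, h⟩

lemma measurable_dimAt {n : ℕ} (𝒜 : Finset (AffForm n)) (k : ℕ) :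
    MeasurableSet {y | dimAt 𝒜 y = k} := by
  have : {y | dimAt 𝒜 y = k} = ⋃ σ ∈ {σ : Idx 𝒜 → SignType | dimS (faceSet 𝒜 σ) = k},
      faceSet 𝒜 σ := by
    ext y
    simp only [Set.mem_ofPred_eq, Set.mem_iUnion, exists_prop]
    constructor
    · intro h
      exact ⟨sv 𝒜 y, h, mem_cell 𝒜 y⟩
    · rintro ⟨σ, h, hy⟩
      have : sv 𝒜 y = σ := funext hy
      rw [dimAt, this, h]
  rw [this]
  refine MeasurableSet.biUnion (Set.to_countable _) fun σ _ => ?_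
  have : faceSet 𝒜 σ = ⋂ ℓ : Idx 𝒜, (fun z => SignType.sign (ℓ.1 z)) ⁻¹' {σ ℓ} := by
    ext z; simp [faceSet]
  rw [this]
  refine MeasurableSet.iInter fun ℓ => ?_
  have hm := (aff_cont ℓ.1).measurable
  have h3 : (fun z => SignType.sign (ℓ.1 z)) ⁻¹' {σ ℓ} = ℓ.1 ⁻¹' (SignType.sign ⁻¹' {σ ℓ}) := rfl
  rw [h3]
  apply hm
  rcases (σ ℓ).trichotomy with h | h | h <;> rw [h]
  · have : (SignType.sign ⁻¹' {-1} : Set ℝ) = Set.Iio 0 := by ext; simp [sign_eq_neg_one_iff]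
    rw [this]; exact measurableSet_Iio
  · have : (SignType.sign ⁻¹' {0} : Set ℝ) = {0} := by ext; simp
    rw [this]; exact measurableSet_singleton _
  · have : (SignType.sign ⁻¹' {1} : Set ℝ) = Set.Ioi 0 := by ext; simp [sign_eq_one_iff]
    rw [this]; exact measurableSet_Ioi

/-- a flat as an affine subspace -/
def flatSub {n : ℕ} (𝒜 : Finset (AffForm n)) (X : Flat 𝒜) : AffineSubspace ℝ (V n) :=
  ⨅ ℓ : {ℓ : Idx 𝒜 // X.1 ⊆ hypSet ℓ.1}, zeroSub ℓ.1.1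

lemma mem_flat {n : ℕ} (𝒜 : Finset (AffForm n)) (X : Flat 𝒜) (z : V n) :
    z ∈ X.1 ↔ ∀ ℓ : Idx 𝒜, X.1 ⊆ hypSet ℓ.1 → ℓ.1 z = 0 := by
  conv_lhs => rw [flat_eq_inter 𝒜 X]
  simp [hypSet]

lemma coe_flatSub {n : ℕ} (𝒜 : Finset (AffForm n)) (X : Flat 𝒜) :
    (flatSub 𝒜 X : Set (V n)) = X.1 := by
  ext z
  rw [mem_flat, flatSub, AffineSubspace.coe_iInf, Set.mem_iInter]
  constructor
  · intro h ℓ hℓ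
    exact (mem_zeroSub _ _).1 (h ⟨ℓ, hℓ⟩)
  · intro h ℓ
    exact (mem_zeroSub _ _).2 (h ℓ.1 ℓ.2)

lemma flat_convex {n : ℕ} (𝒜 : Finset (AffForm n)) (X : Flat 𝒜) : Convex ℝ X.1 := by
  rw [← coe_flatSub]; exact AffineSubspace.convex _

lemma flat_closed {n : ℕ} (𝒜 : Finset (AffForm n)) (X : Flat 𝒜) : IsClosed X.1 := by
  rw [← coe_flatSub]; exact AffineSubspace.closed_of_finiteDimensional _

lemma flat_line {n : ℕ} (𝒜 : Finset (AffForm n)) (X : Flat 𝒜) {x y : V n} (hx : x ∈ X.1)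
    (hy : y ∈ X.1) (e : ℝ) : x + e • (y - x) ∈ X.1 := by
  rw [mem_flat] at *
  intro ℓ hℓ
  rw [aff_line, hx ℓ hℓ, hy ℓ hℓ]; simp

lemma flat_RO {n : ℕ} (𝒜 : Finset (AffForm n)) (X : Flat 𝒜) : RO X.1 := by
  refine ⟨flat_convex 𝒜 X, fun x hx y hy => ⟨1, one_pos, ?_⟩⟩
  have := flat_line 𝒜 X hx hy (-1)
  rwa [show x + (1 : ℝ) • (x - y) = x + (-1 : ℝ) • (y - x) by module]

lemma face_sub_supp {n : ℕ} (𝒜 : Finset (AffForm n)) (F : Face 𝒜) :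
    Face.carrier 𝒜 F ⊆ (supp 𝒜 F).1 := by
  intro z hz
  simp only [supp, Set.mem_iInter, Set.mem_ofPred_eq]
  intro ℓ hℓ
  have := hz ℓ
  rw [hℓ, sign_eq_zero_iff] at this
  exact this

lemma supp_sub_of_mem {n : ℕ} (𝒜 : Finset (AffForm n)) (F : Face 𝒜) (X : Flat 𝒜) {z : V n}
    (hz : z ∈ Face.carrier 𝒜 F) (hX : z ∈ X.1) : (supp 𝒜 F).1 ⊆ X.1 := by
  intro w hw
  rw [mem_flat] at hX ⊢
  intro ℓ hℓ
  simp only [supp, Set.mem_iInter, Set.mem_ofPred_eq] at hw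
  apply hw ℓ
  rw [← hz ℓ, hX ℓ hℓ, sign_zero]

open Classical in
lemma gg_flat {n : ℕ} (𝒜 : Finset (AffForm n)) (X : Flat 𝒜) (y u : V n) (hy : y ∈ X.1) :
    (∑ F : Face 𝒜, if (supp 𝒜 F).1 ⊆ X.1 then gg y u (Face.carrier 𝒜 F) else 0) = gg y u X.1 := by
  rw [gg_sum y u (Idx 𝒜) (fun ℓ => ℓ.1) X.1 (flat_RO 𝒜 X)
    (fun z hz e _ _ => flat_line 𝒜 X hy hz e)]
  refine Fintype.sum_of_injective Face.sgn (fun F G h => Face.ext h) _ _ ?_ ?_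
  · intro σ hσ
    have : X.1 ∩ {z | ∀ ℓ : Idx 𝒜, SignType.sign (ℓ.1 z) = σ ℓ} = ∅ := by
      rw [← Set.not_nonempty_iff_eq_empty]
      rintro ⟨z, -, hz⟩
      exact hσ ⟨⟨σ, ⟨z, hz⟩⟩, rfl⟩
    rw [this, gg_empty]
  · intro F
    split_ifs with h
    · congr 1
      exact (Set.inter_eq_right.2 ((face_sub_supp 𝒜 F).trans h)).symm
    · have : X.1 ∩ {z | ∀ ℓ : Idx 𝒜, SignType.sign (ℓ.1 z) = F.sgn ℓ} = ∅ := by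
        rw [← Set.not_nonempty_iff_eq_empty]
        rintro ⟨z, hz, hz'⟩
        exact h (supp_sub_of_mem 𝒜 F X hz' hz)
      rw [this, gg_empty]

open Classical in
lemma gg_face {n : ℕ} (𝒜 : Finset (AffForm n)) (F : Face 𝒜) (x y : V n) :
    gg y (x - y) (Face.carrier 𝒜 F) =
      if np (closure (Face.carrier 𝒜 F)) x = y then (-1) ^ dimS (Face.carrier 𝒜 F) else 0 := by
  have hne : (closure (Face.carrier 𝒜 F)).Nonempty := F.nonempty.closure
  have e : closure (Face.carrier 𝒜 F) = clSet 𝒜 F.sgn := closure_faceSet 𝒜 F.sgn F.nonempty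
  have hcv : Convex ℝ (closure (Face.carrier 𝒜 F)) := by rw [e]; exact clSet_convex _ _
  have hs := np_spec hcv isClosed_closure hne x
  rw [gg]
  refine if_congr ?_ rfl rfl
  constructor
  · rintro ⟨h1, h2, h3⟩
    refine nearest_unique hcv hs ((mem_nearest hcv).2 ⟨star_mem_closure h2 h1, ?_⟩)
    have hcl : IsClosed {z : V n | inner ℝ (x - y) (z - y) ≤ 0} :=
      isClosed_le (by fun_prop) continuous_const
    exact fun z hz => closure_minimal (t := {z : V n | inner ℝ (x - y) (z - y) ≤ 0}) h3 hcl hz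
  · rintro rfl
    rw [mem_nearest hcv] at hs
    refine ⟨F.nonempty, clSet_star 𝒜 F.sgn ?_, fun z hz => hs.2 z (subset_closure hz)⟩
    rw [← e]; exact hs.1

open Classical in
lemma gg_X {n : ℕ} (𝒜 : Finset (AffForm n)) (X : Flat 𝒜) (x y : V n) (hy : y ∈ X.1) :
    gg y (x - y) X.1 = if np X.1 x = y then (-1) ^ dimS X.1 else 0 := by
  have hs := np_spec (flat_convex 𝒜 X) (flat_closed 𝒜 X) X.2.1 x
  rw [gg]
  refine if_congr ?_ rfl rfl
  constructor
  · rintro ⟨h1, h2, h3⟩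
    exact nearest_unique (flat_convex 𝒜 X) hs ((mem_nearest (flat_convex 𝒜 X)).2 ⟨hy, h3⟩)
  · rintro rfl
    rw [mem_nearest (flat_convex 𝒜 X)] at hs
    exact ⟨X.2.1, fun z hz e _ _ => flat_line 𝒜 X hy hz e, hs.2⟩

open Classical in
lemma pointwise {n : ℕ} (𝒜 : Finset (AffForm n)) (X : Flat 𝒜) (x : V n) (k : ℕ) :
    (∑ F : Face 𝒜, if (supp 𝒜 F).1 ⊆ X.1 then (-1 : ℝ) ^ dimS (Face.carrier 𝒜 F) *
      (if dimAt 𝒜 (np (closure (Face.carrier 𝒜 F)) x) = k then 1 else 0) else 0)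
    = (-1) ^ dimS X.1 * (if dimAt 𝒜 (np X.1 x) = k then 1 else 0) := by
  let Y : Finset (V n) := insert (np X.1 x) (((Finset.univ : Finset (Face 𝒜)).filter
    (fun F => (supp 𝒜 F).1 ⊆ X.1)).image (fun F => np (closure (Face.carrier 𝒜 F)) x))
  have hYX : ∀ y ∈ Y, y ∈ X.1 := by
    intro y hy
    rw [Finset.mem_insert, Finset.mem_image] at hy
    rcases hy with rfl | ⟨F, hF, rfl⟩
    · exact (np_spec (flat_convex 𝒜 X) (flat_closed 𝒜 X) X.2.1 x).1
    · have hF' := (Finset.mem_filter.1 hF).2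
      have hne : (closure (Face.carrier 𝒜 F)).Nonempty := F.nonempty.closure
      have e : closure (Face.carrier 𝒜 F) = clSet 𝒜 F.sgn := closure_faceSet 𝒜 F.sgn F.nonempty
      have hcv : Convex ℝ (closure (Face.carrier 𝒜 F)) := by rw [e]; exact clSet_convex _ _
      exact closure_minimal ((face_sub_supp 𝒜 F).trans hF') (flat_closed 𝒜 X)
        (np_spec hcv isClosed_closure hne x).1
  have h1 : ∀ (y0 : V n) (c : ℝ), y0 ∈ Y → c * (if dimAt 𝒜 y0 = k then 1 else 0) =
      ∑ y ∈ Y, (if dimAt 𝒜 y = k then 1 else 0) * (if y0 = y then c else 0) := by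
    intro y0 c h0
    rw [Finset.sum_eq_single y0]
    · simp
    · intro b _ hb
      rw [if_neg (Ne.symm hb), mul_zero]
    · exact fun h => (h h0).elim
  rw [h1 _ _ (Finset.mem_insert_self _ _)]
  calc _ = ∑ F : Face 𝒜, ∑ y ∈ Y, (if dimAt 𝒜 y = k then (1 : ℝ) else 0) *
        (if (supp 𝒜 F).1 ⊆ X.1 then gg y (x - y) (Face.carrier 𝒜 F) else 0) := by
        refine Finset.sum_congr rfl fun F _ => ?_
        by_cases h : (supp 𝒜 F).1 ⊆ X.1
        · simp only [if_pos h]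
          rw [h1 _ _ (Finset.mem_insert_of_mem (Finset.mem_image.2
            ⟨F, Finset.mem_filter.2 ⟨Finset.mem_univ _, h⟩, rfl⟩))]
          refine Finset.sum_congr rfl fun y _ => ?_
          rw [gg_face]
        · simp only [if_neg h, mul_zero, Finset.sum_const_zero]
    _ = _ := by
        rw [Finset.sum_comm]
        refine Finset.sum_congr rfl fun y hy => ?_
        rw [← Finset.mul_sum, gg_flat 𝒜 X y _ (hYX y hy), gg_X 𝒜 X x y (hYX y hy)]

lemma null_proj {n : ℕ} (𝒜 : Finset (AffForm n)) (X : Flat 𝒜) (a : AffForm n)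
    (ha : ∃ z ∈ X.1, a z ≠ 0) : volume {x : V n | a (np X.1 x) = 0} = 0 := by
  obtain ⟨z, hz, haz⟩ := ha
  have : Nonempty (flatSub 𝒜 X) := ⟨⟨z, by rw [← SetLike.mem_coe, coe_flatSub]; exact hz⟩⟩
  have hnp : ∀ x, np X.1 x = EuclideanGeometry.orthogonalProjection (flatSub 𝒜 X) x := by
    intro x
    refine nearest_unique (flat_convex 𝒜 X)
      (np_spec (flat_convex 𝒜 X) (flat_closed 𝒜 X) X.2.1 x) ((mem_nearest (flat_convex 𝒜 X)).2 ?_)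
    have hm := EuclideanGeometry.orthogonalProjection_mem (s := flatSub 𝒜 X) x
    refine ⟨by rw [← coe_flatSub]; exact hm, ?_⟩
    intro w hw
    rw [← coe_flatSub] at hw
    have h1 := EuclideanGeometry.vsub_orthogonalProjection_mem_direction_orthogonal (flatSub 𝒜 X) x
    have h2 := AffineSubspace.vsub_mem_direction hw hm
    rw [Submodule.mem_orthogonal'] at h1
    exact (h1 _ h2).le
  let b : AffForm n := (a.comp (flatSub 𝒜 X).subtype).comp
    (EuclideanGeometry.orthogonalProjection (flatSub 𝒜 X)).toAffineMap
  have hb : ∀ x, b x = a (np X.1 x) := by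
    intro x; rw [hnp]; rfl
  have hset : {x : V n | a (np X.1 x) = 0} = zeroSub b := by
    ext x
    rw [SetLike.mem_coe, mem_zeroSub, hb]; rfl
  rw [hset]
  apply Measure.addHaar_affineSubspace
  intro htop
  have h1 : z ∈ zeroSub b := by rw [htop]; trivial
  rw [mem_zeroSub, hb] at h1
  apply haz
  have h2 : np X.1 z = z := by
    refine nearest_unique (flat_convex 𝒜 X)
      (np_spec (flat_convex 𝒜 X) (flat_closed 𝒜 X) X.2.1 z) ((mem_nearest (flat_convex 𝒜 X)).2 ?_)
    exact ⟨hz, fun w _ => by simp⟩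
  rwa [h2] at h1

lemma ae_dim {n : ℕ} (𝒜 : Finset (AffForm n)) (X : Flat 𝒜) :
    ∀ᵐ x : V n, dimAt 𝒜 (np X.1 x) = dimS X.1 := by
  have h : ∀ᵐ x : V n, ∀ ℓ : Idx 𝒜, (∃ z ∈ X.1, ℓ.1 z ≠ 0) → ℓ.1 (np X.1 x) ≠ 0 := by
    rw [ae_all_iff]
    intro ℓ
    by_cases hz : ∃ z ∈ X.1, ℓ.1 z ≠ 0
    · have := null_proj 𝒜 X ℓ.1 hz
      rw [ae_iff]
      convert this using 2
      ext x; simp only [Set.mem_ofPred_eq, ne_eq, Classical.not_imp, not_not, and_iff_right_iff_imp]; exact fun _ => hz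
    · exact Filter.Eventually.of_forall fun x h => (hz h).elim
  filter_upwards [h] with x hx
  have hm : np X.1 x ∈ X.1 := (np_spec (flat_convex 𝒜 X) (flat_closed 𝒜 X) X.2.1 x).1
  have hz : ∀ ℓ : Idx 𝒜, ℓ.1 (np X.1 x) = 0 → X.1 ⊆ hypSet ℓ.1 := by
    intro ℓ h0 z hzX
    by_contra hc
    exact hx ℓ ⟨z, hzX, hc⟩ h0
  apply le_antisymm
  · apply dimS_mono
    intro z hzc
    rw [mem_flat]
    intro ℓ hℓ
    have h1 := hzc ℓ
    have h2 : ℓ.1 (np X.1 x) = 0 := hℓ hm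
    rw [sv, h2, sign_zero, sign_eq_zero_iff] at h1
    exact h1
  · exact dimS_le_of_line (mem_cell 𝒜 _) hm fun z hzX => cell_line 𝒜 _ z
      fun ℓ h0 => hz ℓ h0 hzX

/-- volume ratio -/
def ratio {n : ℕ} (S : Set (V n)) (R : ℝ) : ℝ :=
  (volume (S ∩ Metric.ball (0 : V n) R)).toReal / (volume (Metric.ball (0 : V n) R)).toReal

lemma ratio_eq {n : ℕ} (S : Set (V n)) (hS : MeasurableSet S) (R : ℝ) :
    ratio S R = (∫ x in Metric.ball (0 : V n) R, S.indicator (fun _ => (1 : ℝ)) x) /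
      (volume (Metric.ball (0 : V n) R)).toReal := by
  rw [ratio, integral_indicator hS, Measure.restrict_restrict hS]
  simp [Measure.real]

open Classical in
lemma ratio_sum {n : ℕ} (𝒜 : Finset (AffForm n)) (X : Flat 𝒜) (k : ℕ) (R : ℝ) :
    (∑ F : Face 𝒜, if (supp 𝒜 F).1 ⊆ X.1 then (-1 : ℝ) ^ dimS (Face.carrier 𝒜 F) *
      ratio (projSet (closure (Face.carrier 𝒜 F)) k) R else 0)
    = (-1) ^ dimS X.1 * ratio {x | dimAt 𝒜 (np X.1 x) = k} R := by
  have hmF : ∀ F : Face 𝒜, MeasurableSet (projSet (closure (Face.carrier 𝒜 F)) k) := by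
    intro F
    have hne : (closure (Face.carrier 𝒜 F)).Nonempty := F.nonempty.closure
    have e : closure (Face.carrier 𝒜 F) = clSet 𝒜 F.sgn := closure_faceSet 𝒜 F.sgn F.nonempty
    have hcv : Convex ℝ (closure (Face.carrier 𝒜 F)) := by rw [e]; exact clSet_convex _ _
    have : projSet (closure (Face.carrier 𝒜 F)) k =
        np (closure (Face.carrier 𝒜 F)) ⁻¹' {y | dimAt 𝒜 y = k} := by
      ext x; exact mem_projSet 𝒜 F x k
    rw [this]
    exact (np_cont hcv isClosed_closure hne).measurable (measurable_dimAt 𝒜 k)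
  have hmX : MeasurableSet {x | dimAt 𝒜 (np X.1 x) = k} :=
    (np_cont (flat_convex 𝒜 X) (flat_closed 𝒜 X) X.2.1).measurable (measurable_dimAt 𝒜 k)
  have hint : ∀ S : Set (V n), MeasurableSet S → IntegrableOn (S.indicator (fun _ => (1 : ℝ)))
      (Metric.ball (0 : V n) R) := by
    intro S hS
    exact (integrableOn_const (measure_ball_lt_top).ne).indicator hS
  rw [ratio_eq _ hmX]
  simp_rw [ratio_eq _ (hmF _)]
  rw [← mul_div_assoc, ← integral_const_mul]
  have hpt : ∀ x, (-1 : ℝ) ^ dimS X.1 *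
      {x | dimAt 𝒜 (np X.1 x) = k}.indicator (fun _ => (1 : ℝ)) x =
      ∑ F : Face 𝒜, if (supp 𝒜 F).1 ⊆ X.1 then (-1 : ℝ) ^ dimS (Face.carrier 𝒜 F) *
        (projSet (closure (Face.carrier 𝒜 F)) k).indicator (fun _ => (1 : ℝ)) x else 0 := by
    intro x
    have := pointwise 𝒜 X x k
    simp only [Set.indicator_apply, mem_projSet]
    exact this.symm
  simp_rw [hpt]
  rw [integral_finsetSum, Finset.sum_div]
  · refine Finset.sum_congr rfl fun F _ => ?_
    split_ifs
    · rw [integral_const_mul, mul_div_assoc]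
    · simp
  · intro F _
    split_ifs
    · exact (hint _ (hmF F)).const_mul _
    · exact integrable_zero _ _ _

lemma ratio_X {n : ℕ} (𝒜 : Finset (AffForm n)) (X : Flat 𝒜) (k : ℕ) (R : ℝ) (hR : 0 < R) :
    ratio {x | dimAt 𝒜 (np X.1 x) = k} R = if k = dimS X.1 then 1 else 0 := by
  have hae := ae_dim 𝒜 X
  have hp : 0 < volume (Metric.ball (0 : V n) R) := Metric.measure_ball_pos _ _ hR
  have hf : volume (Metric.ball (0 : V n) R) < ⊤ := measure_ball_lt_top
  have hpos : 0 < (volume (Metric.ball (0 : V n) R)).toReal := ENNReal.toReal_pos hp.ne' hf.ne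
  rw [ratio]
  split_ifs with h
  · have : volume ({x | dimAt 𝒜 (np X.1 x) = k} ∩ Metric.ball (0 : V n) R) =
        volume (Metric.ball (0 : V n) R) := by
      apply measure_congr
      filter_upwards [hae] with x hx
      refine propext ?_
      change (_ ∧ _) ↔ _
      exact and_iff_right (hx.trans h.symm)
    rw [this, div_self hpos.ne']
  · have : volume ({x | dimAt 𝒜 (np X.1 x) = k} ∩ Metric.ball (0 : V n) R) = 0 := by
      apply measure_mono_null Set.inter_subset_left
      rw [measure_eq_zero_iff_ae_notMem]
      filter_upwards [hae] with x hx hx'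
      exact h (hx'.symm.trans hx)
    rw [this]; simp

open Classical in
lemma v_sum {n : ℕ} (𝒜 : Finset (AffForm n)) (X : Flat 𝒜) (v : Face 𝒜 → ℕ → ℝ)
    (hv : ∀ F : Face 𝒜, HasIntrinsicVolumes (closure (Face.carrier 𝒜 F)) (v F)) (k : ℕ) :
    (∑ F : Face 𝒜, if (supp 𝒜 F).1 ⊆ X.1 then (-1 : ℝ) ^ dimS (Face.carrier 𝒜 F) * v F k else 0)
      = (-1) ^ dimS X.1 * if k = dimS X.1 then 1 else 0 := by
  have h1 : Filter.Tendsto (fun R : ℝ => ∑ F : Face 𝒜, if (supp 𝒜 F).1 ⊆ X.1 then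
      (-1 : ℝ) ^ dimS (Face.carrier 𝒜 F) *
      ratio (projSet (closure (Face.carrier 𝒜 F)) k) R else 0) Filter.atTop
      (nhds (∑ F : Face 𝒜, if (supp 𝒜 F).1 ⊆ X.1 then
        (-1 : ℝ) ^ dimS (Face.carrier 𝒜 F) * v F k else 0)) := by
    refine tendsto_finsetSum _ fun F _ => ?_
    split_ifs
    · exact (hv F k).const_mul _
    · exact tendsto_const_nhds
  refine tendsto_nhds_unique h1 (tendsto_const_nhds.congr' ?_)
  filter_upwards [Filter.eventually_gt_atTop 0] with R hR
  rw [ratio_sum, ratio_X 𝒜 X k R hR]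

lemma v_zero {n : ℕ} (𝒜 : Finset (AffForm n)) (F : Face 𝒜) (v : ℕ → ℝ)
    (hv : HasIntrinsicVolumes (closure (Face.carrier 𝒜 F)) v) (k : ℕ)
    (hk : dimS (Face.carrier 𝒜 F) < k) : v k = 0 := by
  have hemp : projSet (closure (Face.carrier 𝒜 F)) k = ∅ := by
    rw [← Set.not_nonempty_iff_eq_empty]
    rintro ⟨x, y, hy, Q, hQ, hd, -⟩
    have hQP : Q ⊆ closure (Face.carrier 𝒜 F) := by
      rcases hQ with rfl | ⟨-, L, -, rfl⟩
      · exact subset_rfl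
      · exact fun z hz => hz.1
    have h1 := dimS_mono hQP
    have h2 : dimS (closure (Face.carrier 𝒜 F)) ≤ dimS (Face.carrier 𝒜 F) := by
      obtain ⟨f, hf⟩ := F.nonempty
      refine dimS_le_of_line (x := f) hf (subset_closure hf) fun z hz => ⟨1 / 2, by norm_num, ?_⟩
      have e : closure (Face.carrier 𝒜 F) = clSet 𝒜 F.sgn :=
        closure_faceSet 𝒜 F.sgn F.nonempty
      rw [e] at hz
      have := clSet_star 𝒜 F.sgn hz f hf (1 / 2) (by norm_num) (by norm_num)
      rw [show f + (1 / 2 : ℝ) • (z - f) = z + (1 / 2 : ℝ) • (f - z) by module]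
      exact this
    omega
  have := hv k
  rw [hemp] at this
  simp only [Set.empty_inter, measure_empty, ENNReal.toReal_zero, zero_div] at this
  exact tendsto_nhds_unique this tendsto_const_nhds

/-- **Theorem (the intrinsic element is characteristic).**
The element `ν_t = Σ_F (-1)^{dim F} (Σ_{k=d}^{dim F} (-1)^k v_k(cl F) t^{k-d}) H_F`
is characteristic of parameter `t`. -/
theorem intrinsic_isCharacteristic {n : ℕ} (𝒜 : Finset (AffForm n))
    (h𝒜 : ∀ ℓ ∈ 𝒜, ℓ.linear ≠ 0)
    (d : ℕ) (hd : ∀ X : Flat 𝒜, IsMin X → dimS X.1 = d)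
    (v : Face 𝒜 → ℕ → ℝ)
    (hv : ∀ F : Face 𝒜, HasIntrinsicVolumes (closure (Face.carrier 𝒜 F)) (v F))
    (t : ℝ) :
    IsCharacteristic 𝒜 d
      (fun F => (-1 : ℝ) ^ (dimS (Face.carrier 𝒜 F)) *
        ∑ k ∈ Finset.Icc d (dimS (Face.carrier 𝒜 F)),
          (-1 : ℝ) ^ k * v F k * t ^ (k - d)) t := by
  classical
  intro X
  have hdX : d ≤ dimS X.1 := by
    obtain ⟨Y, hYX, hY⟩ := Finite.exists_le_minimal (p := fun _ : Flat 𝒜 => True) (a := X) trivial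
    rw [minimal_true] at hY
    rw [← hd Y hY]
    exact dimS_mono hYX
  have h1 : ∀ F : Face 𝒜, (supp 𝒜 F).1 ⊆ X.1 → 
      ∑ k ∈ Finset.Icc d (dimS (Face.carrier 𝒜 F)), (-1 : ℝ) ^ k * v F k * t ^ (k - d) =
      ∑ k ∈ Finset.Icc d (dimS X.1), (-1 : ℝ) ^ k * v F k * t ^ (k - d) := by
    intro F hF
    have hle := dimS_mono ((face_sub_supp 𝒜 F).trans hF)
    refine Finset.sum_subset (Finset.Icc_subset_Icc_right hle) ?_
    intro k hk hk'
    rw [Finset.mem_Icc] at hk hk'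
    rw [v_zero 𝒜 F (v F) (hv F) k (by omega)]; simp
  calc _ = ∑ F : Face 𝒜, ∑ k ∈ Finset.Icc d (dimS X.1), ((-1 : ℝ) ^ k * t ^ (k - d)) *
        (if (supp 𝒜 F).1 ⊆ X.1 then (-1 : ℝ) ^ dimS (Face.carrier 𝒜 F) * v F k else 0) := by
        refine Finset.sum_congr rfl fun F _ => ?_
        split_ifs with h
        · beta_reduce
          rw [h1 F h, Finset.mul_sum]
          refine Finset.sum_congr rfl fun k _ => ?_
          ring
        · simp only [mul_zero, Finset.sum_const_zero]
    _ = ∑ k ∈ Finset.Icc d (dimS X.1), ((-1 : ℝ) ^ k * t ^ (k - d)) *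
        ((-1) ^ dimS X.1 * if k = dimS X.1 then 1 else 0) := by
        rw [Finset.sum_comm]
        refine Finset.sum_congr rfl fun k _ => ?_
        rw [← Finset.mul_sum, v_sum 𝒜 X v hv k]
    _ = t ^ (dimS X.1 - d) := by
        rw [Finset.sum_eq_single (dimS X.1)]
        · rw [if_pos rfl, mul_one, mul_right_comm, ← mul_pow]; simp
        · intro k _ hk
          rw [if_neg hk]; simp
        · intro h
          exact (h (Finset.mem_Icc.2 ⟨hdX, le_rfl⟩)).elim


end CharElts
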